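/- (Corollary of Theorems 1 and 2: 2-FWL has stronger link discriminating power than 1-WL.) (i) For every label set Σ, all labeled graphs G = (V,E,l) and G' = (V',E',l') over Σ, and all target links (p,q) in G and (p',q') in G': if (p,q) and (p',q') are 2-FWL-indistinguishable, then they are 1-WL-indistinguishable. (ii) There exist unlabeled graphs G, G' and target links (p,q) in G and (p',q') in G' that are 1-WL-indistinguishable but not 2-FWL-indistinguishable. -/

import Mathlib

open scoped Classical

universe u v

/-- The common 1-WL color type over label set `σ`:
`C 0 = σ`, `C (t+1) = C t × Multiset (C t)`. -/
def WL1Color (σ : Type u) : ℕ → Type u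
  | 0 => σ
  | t + 1 => WL1Color σ t × Multiset (WL1Color σ t)

/-- The 1-WL coloring of a labeled graph `(G, l)`:
`c¹⁰(v) = l v`, `c¹ᵗ⁺¹(v) = (c¹ᵗ(v), {{c¹ᵗ(u) : u ∈ N(v)}})`. -/
noncomputable def wl1 {σ : Type u} {V : Type v} [Fintype V] (G : SimpleGraph V)
    (l : V → σ) : (t : ℕ) → V → WL1Color σ t
  | 0 => l
  | t + 1 => fun v => (wl1 G l t v, (G.neighborFinset v).val.map (wl1 G l t))

/-- The type of initial pair colors over label set `σ`. -/
def PairColor0 (σ : Type u) : Type u := σ × σ × Bool × Bool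

/-- Initial pair color `c⁰(p,q) = (l p, l q, 1_{(p,q)∈E}, 1_{p=q})`. -/
noncomputable def pairInit {σ : Type u} {V : Type v} (G : SimpleGraph V) (l : V → σ)
    (e : V × V) : PairColor0 σ :=
  (l e.1, l e.2, decide (G.Adj e.1 e.2), decide (e.1 = e.2))

/-- The common (plain/local) 2-WL pair color type over label set `σ`. -/
def WL2Color (σ : Type u) : ℕ → Type u
  | 0 => PairColor0 σ
  | t + 1 => WL2Color σ t × Multiset (WL2Color σ t) × Multiset (WL2Color σ t)

/-- The plain 2-WL coloring:
`c₂ᵗ⁺¹(p,q) = (c₂ᵗ(p,q), {{c₂ᵗ(u,q) : u ∈ V}}, {{c₂ᵗ(p,v) : v ∈ V}})`. -/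
noncomputable def wl2 {σ : Type u} {V : Type v} [Fintype V] (G : SimpleGraph V)
    (l : V → σ) : (t : ℕ) → V × V → WL2Color σ t
  | 0 => pairInit G l
  | t + 1 => fun e =>
      (wl2 G l t e,
        Finset.univ.val.map (fun u => wl2 G l t (u, e.2)),
        Finset.univ.val.map (fun v => wl2 G l t (e.1, v)))

/-- The local 2-WL (2-WL_L) coloring:
`cₗᵗ⁺¹(p,q) = (cₗᵗ(p,q), {{cₗᵗ(u,q) : (u,q) ∈ E}}, {{cₗᵗ(p,v) : (p,v) ∈ E}})`. -/
noncomputable def wl2L {σ : Type u} {V : Type v} [Fintype V] (G : SimpleGraph V)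
    (l : V → σ) : (t : ℕ) → V × V → WL2Color σ t
  | 0 => pairInit G l
  | t + 1 => fun e =>
      (wl2L G l t e,
        (Finset.univ.filter (fun u => G.Adj u e.2)).val.map (fun u => wl2L G l t (u, e.2)),
        (Finset.univ.filter (fun v => G.Adj e.1 v)).val.map (fun v => wl2L G l t (e.1, v)))

/-- The common (plain/local) 2-FWL pair color type over label set `σ`. -/
def FWLColor (σ : Type u) : ℕ → Type u
  | 0 => PairColor0 σ
  | t + 1 => FWLColor σ t × Multiset (FWLColor σ t × FWLColor σ t)

/-- The 2-FWL coloring: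
`c_Fᵗ⁺¹(p,q) = (c_Fᵗ(p,q), {{(c_Fᵗ(u,q), c_Fᵗ(p,u)) : u ∈ V}})`. -/
noncomputable def fwl2 {σ : Type u} {V : Type v} [Fintype V] (G : SimpleGraph V)
    (l : V → σ) : (t : ℕ) → V × V → FWLColor σ t
  | 0 => pairInit G l
  | t + 1 => fun e =>
      (fwl2 G l t e,
        Finset.univ.val.map (fun u => (fwl2 G l t (u, e.2), fwl2 G l t (e.1, u))))

/-- The local 2-FWL (2-FWL_L) coloring:
`c_FLᵗ⁺¹(p,q) = (c_FLᵗ(p,q), {{(c_FLᵗ(u,q), c_FLᵗ(p,u)) : (u,q) ∈ E or (p,u) ∈ E}})`. -/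
noncomputable def fwl2L {σ : Type u} {V : Type v} [Fintype V] (G : SimpleGraph V)
    (l : V → σ) : (t : ℕ) → V × V → FWLColor σ t
  | 0 => pairInit G l
  | t + 1 => fun e =>
      (fwl2L G l t e,
        (Finset.univ.filter (fun u => G.Adj u e.2 ∨ G.Adj e.1 u)).val.map
          (fun u => (fwl2L G l t (u, e.2), fwl2L G l t (e.1, u))))

/-- A target link: an ordered pair of distinct, non-adjacent vertices. -/
def IsTargetLink {V : Type v} (G : SimpleGraph V) (e : V × V) : Prop :=
  e.1 ≠ e.2 ∧ ¬ G.Adj e.1 e.2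

/-- `(p,q)` in `(G,l)` and `(p',q')` in `(G',l')` are 1-WL-indistinguishable. -/
noncomputable def WL1Indist {σ : Type u} {V V' : Type v} [Fintype V] [Fintype V']
    (G : SimpleGraph V) (l : V → σ) (G' : SimpleGraph V') (l' : V' → σ)
    (e : V × V) (e' : V' × V') : Prop :=
  ∀ t : ℕ, wl1 G l t e.1 = wl1 G' l' t e'.1 ∧ wl1 G l t e.2 = wl1 G' l' t e'.2

/-- 2-WL-indistinguishability. -/
noncomputable def WL2Indist {σ : Type u} {V V' : Type v} [Fintype V] [Fintype V']
    (G : SimpleGraph V) (l : V → σ) (G' : SimpleGraph V') (l' : V' → σ)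
    (e : V × V) (e' : V' × V') : Prop :=
  ∀ t : ℕ, wl2 G l t e = wl2 G' l' t e'

/-- Local 2-WL (2-WL_L) indistinguishability. -/
noncomputable def WL2LIndist {σ : Type u} {V V' : Type v} [Fintype V] [Fintype V']
    (G : SimpleGraph V) (l : V → σ) (G' : SimpleGraph V') (l' : V' → σ)
    (e : V × V) (e' : V' × V') : Prop :=
  ∀ t : ℕ, wl2L G l t e = wl2L G' l' t e'

/-- 2-FWL-indistinguishability. -/
noncomputable def FWL2Indist {σ : Type u} {V V' : Type v} [Fintype V] [Fintype V']
    (G : SimpleGraph V) (l : V → σ) (G' : SimpleGraph V') (l' : V' → σ)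
    (e : V × V) (e' : V' × V') : Prop :=
  ∀ t : ℕ, fwl2 G l t e = fwl2 G' l' t e'

/-- Local 2-FWL (2-FWL_L) indistinguishability. -/
noncomputable def FWL2LIndist {σ : Type u} {V V' : Type v} [Fintype V] [Fintype V']
    (G : SimpleGraph V) (l : V → σ) (G' : SimpleGraph V') (l' : V' → σ)
    (e : V × V) (e' : V' × V') : Prop :=
  ∀ t : ℕ, fwl2L G l t e = fwl2L G' l' t e'

/-- The 0/1 labeling trick: augment the labeling with indicator of membership in `{p, q}`. -/
noncomputable def label01 {σ : Type u} {V : Type v} (l : V → σ) (e : V × V) :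
    V → σ × Bool :=
  fun v => (l v, decide (v = e.1 ∨ v = e.2))

/-- 1-WL-with-0/1-labeling indistinguishability of target links. -/
noncomputable def WL1LabelIndist {σ : Type u} {V V' : Type v} [Fintype V] [Fintype V']
    (G : SimpleGraph V) (l : V → σ) (G' : SimpleGraph V') (l' : V' → σ)
    (e : V × V) (e' : V' × V') : Prop :=
  WL1Indist G (label01 l e) G' (label01 l' e') e e'

/-- The number of common neighbors of `p` and `q` in `G`. -/
noncomputable def commonNbrCount {V : Type v} [Fintype V] (G : SimpleGraph V)
    (e : V × V) : ℕ :=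
  (G.neighborFinset e.1 ∩ G.neighborFinset e.2).card

/-!
The 2-FWL color of a pair `(p, q)` records, for every `u`, whether `u` is adjacent to `p` and whether
it is adjacent to `q`. Restricting its multiset to the neighbors of `p`, or to those of `q`, recovers
the 1-WL refinement at that endpoint; restricting it to the `u` adjacent to both counts the common
neighbors of `p` and `q`. On an unlabeled regular graph 1-WL is constant, but in the 6-cycle the
pairs `(0, 2)` and `(0, 3)` have one and zero common neighbors.
-/

universe w

/-- The indicator `1_{(p,q)∈E}` carried by the 2-FWL color of `(p, q)` since initialization. -/
def FWLColor.edgeIndicator {σ : Type u} : (t : ℕ) → FWLColor σ t → Bool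
  | 0, c => c.2.2.1
  | t + 1, c => FWLColor.edgeIndicator t c.1

/-- The decoding map from 2-FWL to 1-WL: it sends the 2-FWL color of `(p, q)` to the pair of 1-WL
colors of `p` and `q`. The neighbors of `p` are the `u` whose entry `(c(u,q), c(p,u))` has an edge
in its second component, those of `q` the `u` with an edge in the first. -/
def FWLColor.endpoints {σ : Type u} : (t : ℕ) → FWLColor σ t → WL1Color σ t × WL1Color σ t
  | 0, c => (c.1, c.2.1)
  | t + 1, c =>
      (((FWLColor.endpoints t c.1).1,
          (c.2.filter (fun x => FWLColor.edgeIndicator t x.2)).map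
            (fun x => (FWLColor.endpoints t x.2).2)),
        ((FWLColor.endpoints t c.1).2,
          (c.2.filter (fun x => FWLColor.edgeIndicator t x.1)).map
            (fun x => (FWLColor.endpoints t x.1).1)))

/-- The number of common neighbors of `p` and `q`, read off from the 2-FWL color of `(p, q)`. -/
def FWLColor.commonNbrCount {σ : Type u} (t : ℕ) (c : FWLColor σ (t + 1)) : ℕ :=
  c.2.countP fun x => FWLColor.edgeIndicator t x.2 ∧ FWLColor.edgeIndicator t x.1

section Decoding

variable {σ : Type u} {V : Type v} [Fintype V] (G : SimpleGraph V) (l : V → σ)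

lemma edgeIndicator_fwl2 (t : ℕ) (e : V × V) :
    FWLColor.edgeIndicator t (fwl2 G l t e) = decide (G.Adj e.1 e.2) := by
  induction t with
  | zero => rfl
  | succ _ ih => exact ih

lemma endpoints_fwl2 (t : ℕ) (e : V × V) :
    FWLColor.endpoints t (fwl2 G l t e) = (wl1 G l t e.1, wl1 G l t e.2) := by
  induction t generalizing e with
  | zero => rfl
  | succ t ih =>
    simp only [FWLColor.endpoints, fwl2, wl1, ih, Multiset.filter_map, Multiset.map_map,
      Function.comp_def, edgeIndicator_fwl2, decide_eq_true_eq,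
      SimpleGraph.neighborFinset_eq_filter, Finset.filter_val, G.adj_comm _ e.2]

lemma commonNbrCount_eq_card_filter [DecidableRel G.Adj] (e : V × V) :
    commonNbrCount G e = (Finset.univ.filter fun u => G.Adj e.1 u ∧ G.Adj u e.2).card := by
  unfold commonNbrCount
  congr 1
  ext u
  simp only [Finset.mem_inter, SimpleGraph.mem_neighborFinset, Finset.mem_filter_univ,
    G.adj_comm u]

lemma commonNbrCount_fwl2 (t : ℕ) (e : V × V) :
    FWLColor.commonNbrCount t (fwl2 G l (t + 1) e) = commonNbrCount G e := by
  simp only [FWLColor.commonNbrCount, fwl2, Multiset.countP_map, edgeIndicator_fwl2,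
    decide_eq_true_eq, commonNbrCount_eq_card_filter, Finset.card_def, Finset.filter_val]

end Decoding

section Comparison

variable {σ : Type u} {V : Type v} {V' : Type w} [Fintype V] [Fintype V']
  {G : SimpleGraph V} {G' : SimpleGraph V'}

lemma wl1_eq_of_fwl2_eq {l : V → σ} {l' : V' → σ} {e : V × V} {e' : V' × V'} {t : ℕ}
    (h : fwl2 G l t e = fwl2 G' l' t e') :
    wl1 G l t e.1 = wl1 G' l' t e'.1 ∧ wl1 G l t e.2 = wl1 G' l' t e'.2 := by
  rw [← Prod.mk_inj, ← endpoints_fwl2, ← endpoints_fwl2, h]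

lemma commonNbrCount_eq_of_fwl2_eq {l : V → σ} {l' : V' → σ} {e : V × V} {e' : V' × V'} {t : ℕ}
    (h : fwl2 G l (t + 1) e = fwl2 G' l' (t + 1) e') :
    commonNbrCount G e = commonNbrCount G' e' := by
  rw [← commonNbrCount_fwl2 G l t, h, commonNbrCount_fwl2]

end Comparison

section Regular

variable {σ : Type u}

/-- The 1-WL color of every vertex of a `d`-regular graph with constant label `a`. -/
def WL1Color.regular (a : σ) (d : ℕ) : (t : ℕ) → WL1Color σ t
  | 0 => a
  | t + 1 => (WL1Color.regular a d t, Multiset.replicate d (WL1Color.regular a d t))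

lemma wl1_eq_regular {V : Type v} [Fintype V] {G : SimpleGraph V} [G.LocallyFinite] {d : ℕ}
    (hG : G.IsRegularOfDegree d) (a : σ) (t : ℕ) (v : V) :
    wl1 G (fun _ => a) t v = WL1Color.regular a d t := by
  induction t generalizing v with
  | zero => rfl
  | succ t ih =>
    -- `wl1` uses the classical `Fintype` instance, which need not be the one in `hG`.
    have hcard {_ : Fintype (G.neighborSet v)} : (G.neighborFinset v).card = d := by
      rw [SimpleGraph.card_neighborFinset_eq_degree, ← hG v]
      congr!
    refine Prod.ext (ih v) ?_
    simp only [wl1, WL1Color.regular, ih, Multiset.map_const', Finset.card_val, hcard]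

lemma wl1Indist_of_isRegularOfDegree {V V' : Type v} [Fintype V] [Fintype V']
    {G : SimpleGraph V} {G' : SimpleGraph V'} [G.LocallyFinite] [G'.LocallyFinite] {d : ℕ}
    (hG : G.IsRegularOfDegree d) (hG' : G'.IsRegularOfDegree d) (a : σ)
    (e : V × V) (e' : V' × V') :
    WL1Indist G (fun _ => a) G' (fun _ => a) e e' := fun t => by
  simp only [wl1_eq_regular hG, wl1_eq_regular hG', and_self]

end Regular

open SimpleGraph in
theorem fwl2_stronger_than_wl1_general :
    (∀ (σ : Type u) (V : Type v) (V' : Type w) [Fintype V] [Fintype V']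
        (G : SimpleGraph V) (l : V → σ) (G' : SimpleGraph V') (l' : V' → σ)
        (e : V × V) (e' : V' × V') (t : ℕ), fwl2 G l t e = fwl2 G' l' t e' →
        wl1 G l t e.1 = wl1 G' l' t e'.1 ∧ wl1 G l t e.2 = wl1 G' l' t e'.2) ∧
    (∃ (n : ℕ) (G : SimpleGraph (Fin n)) (e e' : Fin n × Fin n),
        IsTargetLink G e ∧ IsTargetLink G e' ∧
        WL1Indist G (fun _ => ()) G (fun _ => ()) e e' ∧
        fwl2 G (fun _ => ()) 1 e ≠ fwl2 G (fun _ => ()) 1 e') := by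
  refine ⟨fun _ _ _ _ _ _ _ _ _ _ _ _ => wl1_eq_of_fwl2_eq,
    6, cycleGraph 6, (0, 2), (0, 3), ?_, ?_, ?_, fun h => ?_⟩
  · unfold IsTargetLink
    decide
  · unfold IsTargetLink
    decide
  · have hreg : (cycleGraph 6).IsRegularOfDegree 2 := fun _ => cycleGraph_degree_three_le
    exact wl1Indist_of_isRegularOfDegree hreg hreg () _ _
  · have hcount : commonNbrCount (cycleGraph 6) (0, 2) = commonNbrCount (cycleGraph 6) (0, 3) :=
      commonNbrCount_eq_of_fwl2_eq h
    simp only [commonNbrCount_eq_card_filter] at hcount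
    revert hcount
    decide

/-- Corollary of Theorems 1 and 2: 2-FWL has stronger link discriminating power than 1-WL. -/
theorem fwl2_stronger_than_wl1 :
    (∀ (σ : Type u) (V V' : Type v) [Fintype V] [Fintype V']
        (G : SimpleGraph V) (l : V → σ) (G' : SimpleGraph V') (l' : V' → σ)
        (e : V × V) (e' : V' × V'),
        IsTargetLink G e → IsTargetLink G' e' →
        FWL2Indist G l G' l' e e' → WL1Indist G l G' l' e e') ∧
    (∃ (n n' : ℕ) (G : SimpleGraph (Fin n)) (G' : SimpleGraph (Fin n'))
        (e : Fin n × Fin n) (e' : Fin n' × Fin n'),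
        IsTargetLink G e ∧ IsTargetLink G' e' ∧
        WL1Indist G (fun _ => ()) G' (fun _ => ()) e e' ∧
        ¬ FWL2Indist G (fun _ => ()) G' (fun _ => ()) e e') := by
  obtain ⟨hle, n, G, e, e', he, he', hwl1, hfwl2⟩ := fwl2_stronger_than_wl1_general
  exact ⟨fun σ V V' _ _ G l G' l' e e' _ _ h t => hle σ V V' G l G' l' e e' t (h t),
    n, n, G, G, e, e', he, he', hwl1, fun h => hfwl2 (h 1)⟩
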